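/- The limit of F(x) = arcsl(x)/(x·Φ(x⁴, 3/2, 1/4)) as x → 1⁻ equals arcsl(1)/Φ(1, 3/2, 1/4); consequently the constant factor β = arcsl(1)/Φ(1, 3/2, 1/4) in the upper bound arcsl(x) < β·x·Φ(x⁴, 3/2, 1/4) for 0 < x < 1 cannot be replaced by any smaller constant. -/

import Mathlib

/-- The arc lemniscate sine function: `arcsl x = ∫₀ˣ dt / √(1 - t⁴)`. -/
noncomputable def arcsl (x : ℝ) : ℝ := ∫ t in (0:ℝ)..x, 1 / Real.sqrt (1 - t ^ 4)

/-- The Lerch zeta function: `Φ(z, s, a) = ∑ₖ zᵏ / (k + a)ˢ`. -/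
noncomputable def lerchPhi (z s a : ℝ) : ℝ := ∑' k : ℕ, z ^ k / ((k : ℝ) + a) ^ s

/-!
The integrand `1 / √(1 - t⁴)` is dominated on `[0, 1]` by the integrable function `1 / √(1 - t)`,
and the terms of the series for `Φ(z, s, a)` are dominated on `[-1, 1]` by those at `z = 1`, whose
sum converges for `s > 1`. Hence both functions are continuous up to the endpoint `1`, and so is
their ratio. An upper bound `β` for the ratio at points accumulating at `1` passes to the limit.
-/

open Filter MeasureTheory Set Topology

theorem intervalIntegrable_one_div_sqrt_one_sub :
    IntervalIntegrable (fun t : ℝ => 1 / √(1 - t)) volume 0 1 := by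
  have h : IntervalIntegrable (fun t : ℝ => t ^ (-(1 / 2) : ℝ)) volume 1 0 :=
    intervalIntegral.intervalIntegrable_rpow' (by norm_num)
  have h_refl : IntervalIntegrable (fun t : ℝ => (1 - t) ^ (-(1 / 2) : ℝ)) volume 0 1 := by
    simpa using h.comp_sub_left 1
  refine h_refl.congr fun t ht => ?_
  rw [uIoc_of_le zero_le_one] at ht
  simp only [Real.rpow_neg (sub_nonneg.2 ht.2), Real.sqrt_eq_rpow, one_div]

theorem one_div_sqrt_one_sub_pow_le {n : ℕ} (hn : n ≠ 0) {t : ℝ} (ht : t ∈ Icc 0 1) :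
    1 / √(1 - t ^ n) ≤ 1 / √(1 - t) := by
  rcases ht.2.eq_or_lt with rfl | ht1
  · simp
  have : t ^ n ≤ t := pow_le_of_le_one ht.1 ht.2 hn
  have : 0 < 1 - t := sub_pos.2 ht1
  gcongr

theorem intervalIntegrable_one_div_sqrt_one_sub_pow {n : ℕ} (hn : n ≠ 0) :
    IntervalIntegrable (fun t : ℝ => 1 / √(1 - t ^ n)) volume 0 1 := by
  refine intervalIntegrable_one_div_sqrt_one_sub.mono_fun
    (by fun_prop : Measurable fun t : ℝ => 1 / √(1 - t ^ n)).aestronglyMeasurable ?_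
  filter_upwards [ae_restrict_mem measurableSet_uIoc] with t ht
  rw [uIoc_of_le zero_le_one] at ht
  rw [Real.norm_of_nonneg (by positivity), Real.norm_of_nonneg (by positivity)]
  exact one_div_sqrt_one_sub_pow_le hn (Ioc_subset_Icc_self ht)

theorem continuousOn_arcsl : ContinuousOn arcsl (Icc (-1) 1) := by
  have h_right : IntervalIntegrable (fun t : ℝ => 1 / √(1 - t ^ 4)) volume 0 1 :=
    intervalIntegrable_one_div_sqrt_one_sub_pow four_ne_zero
  have h_left : IntervalIntegrable (fun t : ℝ => 1 / √(1 - t ^ 4)) volume (-1) 0 := by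
    rw [IntervalIntegrable.iff_comp_neg]
    simpa [(by decide : Even 4).neg_pow] using h_right.symm
  have h_le : (-1 : ℝ) ≤ 1 := by norm_num
  rw [← uIcc_of_le h_le]
  exact intervalIntegral.continuousOn_primitive_interval' (h_left.trans h_right) (by simp)

section lerchPhi

variable {z s a : ℝ}

theorem summable_one_div_nat_add_rpow_of_pos (hs : 1 < s) (ha : 0 < a) :
    Summable fun k : ℕ => 1 / ((k : ℝ) + a) ^ s :=
  ((Real.summable_one_div_nat_add_rpow a s).2 hs).congr fun k => by
    rw [abs_of_pos (by positivity)]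

theorem norm_lerchPhi_term_le (ha : 0 < a) (hz : z ∈ Icc (-1) 1) (k : ℕ) :
    ‖z ^ k / ((k : ℝ) + a) ^ s‖ ≤ 1 / ((k : ℝ) + a) ^ s := by
  have h_pos : 0 < ((k : ℝ) + a) ^ s := by positivity
  rw [norm_div, norm_pow, Real.norm_of_nonneg h_pos.le]
  gcongr
  exact pow_le_one₀ (norm_nonneg z) (abs_le.2 hz)

theorem continuousOn_lerchPhi (hs : 1 < s) (ha : 0 < a) :
    ContinuousOn (fun z => lerchPhi z s a) (Icc (-1) 1) :=
  continuousOn_tsum (fun k => ((continuous_pow k).div_const _).continuousOn)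
    (summable_one_div_nat_add_rpow_of_pos hs ha) fun k _ hz => norm_lerchPhi_term_le ha hz k

theorem lerchPhi_pos (hs : 1 < s) (ha : 0 < a) (hz : z ∈ Icc 0 1) : 0 < lerchPhi z s a := by
  have hz0 : 0 ≤ z := hz.1
  have h_sum : Summable fun k : ℕ => z ^ k / ((k : ℝ) + a) ^ s :=
    (summable_one_div_nat_add_rpow_of_pos hs ha).of_norm_bounded
      (norm_lerchPhi_term_le ha (Icc_subset_Icc_left (by norm_num) hz))
  refine h_sum.tsum_pos (fun k => by positivity) 0 ?_
  rw [pow_zero]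
  positivity

theorem mul_lerchPhi_pow_pos (hs : 1 < s) (ha : 0 < a) {x : ℝ} (hx : x ∈ Ioc 0 1) (n : ℕ) :
    0 < x * lerchPhi (x ^ n) s a :=
  mul_pos hx.1 (lerchPhi_pos hs ha ⟨pow_nonneg hx.1.le n, pow_le_one₀ hx.1.le hx.2⟩)

theorem continuousOn_arcsl_div_mul_lerchPhi (hs : 1 < s) (ha : 0 < a) (n : ℕ) :
    ContinuousOn (fun x => arcsl x / (x * lerchPhi (x ^ n) s a)) (Ioc 0 1) := by
  have h_maps : MapsTo (fun x : ℝ => x ^ n) (Ioc 0 1) (Icc (-1) 1) := fun x hx =>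
    ⟨by linarith [pow_pos hx.1 n], pow_le_one₀ hx.1.le hx.2⟩
  have h_arcsl : ContinuousOn arcsl (Ioc 0 1) :=
    continuousOn_arcsl.mono fun x hx => ⟨by linarith [hx.1], hx.2⟩
  have h_lerchPhi : ContinuousOn (fun x => lerchPhi (x ^ n) s a) (Ioc 0 1) :=
    (continuousOn_lerchPhi hs ha).comp (continuousOn_pow n) h_maps
  exact h_arcsl.div (continuousOn_id.mul h_lerchPhi) fun x hx =>
    (mul_lerchPhi_pow_pos hs ha hx n).ne'

theorem tendsto_arcsl_div_mul_lerchPhi (hs : 1 < s) (ha : 0 < a) (n : ℕ) :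
    Tendsto (fun x => arcsl x / (x * lerchPhi (x ^ n) s a)) (𝓝[<] 1)
      (𝓝 (arcsl 1 / lerchPhi 1 s a)) := by
  have h := continuousOn_arcsl_div_mul_lerchPhi hs ha n 1 (right_mem_Ioc.2 one_pos)
  rw [ContinuousWithinAt, one_pow, one_mul] at h
  rw [← nhdsWithin_Ioo_eq_nhdsLT (one_pos : (0 : ℝ) < 1)]
  exact h.mono_left (nhdsWithin_mono 1 Ioo_subset_Ioc_self)

theorem tendsto_ratio_one_and_beta_sharp_general (hs : 1 < s) (ha : 0 < a) (n : ℕ) :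
    Tendsto (fun x => arcsl x / (x * lerchPhi (x ^ n) s a)) (𝓝[<] 1)
      (𝓝 (arcsl 1 / lerchPhi 1 s a)) ∧
    ∀ β : ℝ, (∃ᶠ x in 𝓝[<] 1, arcsl x ≤ β * x * lerchPhi (x ^ n) s a) →
      arcsl 1 / lerchPhi 1 s a ≤ β := by
  have h_lim := tendsto_arcsl_div_mul_lerchPhi hs ha n
  refine ⟨h_lim, fun β hβ => le_of_tendsto_of_frequently h_lim ?_⟩
  have h_near : ∀ᶠ x : ℝ in 𝓝[<] 1, x ∈ Ioo 0 1 := Ioo_mem_nhdsLT one_pos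
  refine (hβ.and_eventually h_near).mono fun x ⟨h_le, hx⟩ => ?_
  rwa [div_le_iff₀ (mul_lerchPhi_pow_pos hs ha (Ioo_subset_Ioc_self hx) n), ← mul_assoc]

end lerchPhi

theorem tendsto_ratio_one_and_beta_sharp :
    Filter.Tendsto (fun x : ℝ => arcsl x / (x * lerchPhi (x ^ 4) (3 / 2) (1 / 4)))
      (nhdsWithin 1 (Set.Iio 1)) (nhds (arcsl 1 / lerchPhi 1 (3 / 2) (1 / 4))) ∧
    ∀ β : ℝ, (∀ x : ℝ, 0 < x → x < 1 →
        arcsl x < β * x * lerchPhi (x ^ 4) (3 / 2) (1 / 4)) →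
      arcsl 1 / lerchPhi 1 (3 / 2) (1 / 4) ≤ β := by
  refine (tendsto_ratio_one_and_beta_sharp_general (by norm_num) (by norm_num) 4).imp_right
    fun h_sharp β hβ => h_sharp β (Eventually.frequently ?_)
  filter_upwards [Ioo_mem_nhdsLT one_pos] with x hx using (hβ x hx.1 hx.2).le
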